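/- Let 4 ≤ p < q, n = p + q, and suppose 2p ≤ q + 4. Every tree T ∈ 𝒯_n^{p,q} that is isomorphic to none of B_{p,q}^{0,0}, B_{p,q}^{0,1}, B_{p,q}^{2,0} satisfies T ≺_s B_{p,q}^{2,0}; that is, in this case B_{p,q}^{2,0} is the unique third last tree in the S-order among 𝒯_n^{p,q}. -/

import Mathlib

open SimpleGraph

open scoped Classical in
/-- The adjacency matrix of a simple graph, with real entries. -/
noncomputable def adjMat {V : Type*} [Fintype V] (G : SimpleGraph V) : Matrix V V ℝ :=
  Matrix.of fun a b => if G.Adj a b then 1 else 0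

/-- The `k`-th spectral moment `S_k(G) = tr(A(G)^k)`. -/
noncomputable def spectralMoment {V : Type*} [Fintype V] [DecidableEq V]
    (G : SimpleGraph V) (k : ℕ) : ℝ :=
  Matrix.trace (adjMat G ^ k)

/-- `SLt G₁ G₂` means `G₁ ≺_s G₂`: for some `k` with `1 ≤ k ≤ n - 1`,
`S_i(G₁) = S_i(G₂)` for all `i < k` and `S_k(G₁) < S_k(G₂)`. -/
def SLt {V : Type*} [Fintype V] [DecidableEq V] (G₁ G₂ : SimpleGraph V) : Prop :=
  ∃ k : ℕ, 1 ≤ k ∧ k ≤ Fintype.card V - 1 ∧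
    (∀ i < k, spectralMoment G₁ i = spectralMoment G₂ i) ∧
    spectralMoment G₁ k < spectralMoment G₂ k

/-- The tree `B_{p,q}^{k,l}` on `p + q` vertices: vertex `0 = u` is adjacent to `1 = v`
and to the `q - 1` vertices `2, …, q`; the distinguished neighbor `2` of `u` carries the
`k` pendant leaves `q+1, …, q+k`; the `l` neighbors `3, …, l+2` of `u` carry one pendant
leaf each (`q+k+j` is attached to `j+2` for `1 ≤ j ≤ l`); and `v` carries the
`p - k - l - 1` pendant leaves `q+k+l+1, …, p+q-1`. -/
def BTree (p q k l : ℕ) : SimpleGraph (Fin (p + q)) :=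
  SimpleGraph.fromRel (fun a b =>
    (a.val = 0 ∧ b.val = 1) ∨
    (a.val = 0 ∧ 2 ≤ b.val ∧ b.val ≤ q) ∨
    (a.val = 2 ∧ q + 1 ≤ b.val ∧ b.val ≤ q + k) ∨
    (q + k + 1 ≤ b.val ∧ b.val ≤ q + k + l ∧ a.val = b.val - (q + k) + 2) ∨
    (a.val = 1 ∧ q + k + l + 1 ≤ b.val))

/-- The tree `D_{p,q}^{k,l}` on `p + q` vertices: vertex `1 = v` is adjacent to `0 = u`
and to the `p - 1` vertices `2, …, p`; the distinguished neighbor `2` of `v` carries the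
`k` pendant leaves `p+1, …, p+k`; the `l` neighbors `3, …, l+2` of `v` carry one pendant
leaf each; and `u` carries the `q - k - l - 1` pendant leaves `p+k+l+1, …, p+q-1`. -/
def DTree (p q k l : ℕ) : SimpleGraph (Fin (p + q)) :=
  SimpleGraph.fromRel (fun a b =>
    (a.val = 0 ∧ b.val = 1) ∨
    (a.val = 1 ∧ 2 ≤ b.val ∧ b.val ≤ p) ∨
    (a.val = 2 ∧ p + 1 ≤ b.val ∧ b.val ≤ p + k) ∨
    (p + k + 1 ≤ b.val ∧ b.val ≤ p + k + l ∧ a.val = b.val - (p + k) + 2) ∨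
    (a.val = 0 ∧ p + k + l + 1 ≤ b.val))

/-- `T ∈ 𝒯_{p+q}^{p,q}`: `T` is a tree on `p + q` vertices with a `(p,q)`-bipartition. -/
def TreeBip (p q : ℕ) (G : SimpleGraph (Fin (p + q))) : Prop :=
  G.IsTree ∧ ∃ A : Finset (Fin (p + q)), A.card = p ∧
    ∀ ⦃x y : Fin (p + q)⦄, G.Adj x y → (x ∈ A ↔ y ∉ A)

/-- `G` is bipartite with parts `S` and its complement. -/
def SplitBy {V : Type*} (G : SimpleGraph V) (S : Finset V) : Prop :=
  ∀ ⦃x y : V⦄, G.Adj x y → (x ∈ S ↔ y ∉ S)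

/-- `G` is bipartite with parts `S` and its complement, the vertex `h` outside `S` is adjacent to
all of `S`, and `h` is the only common neighbor of any two vertices of `S`. -/
structure IsHub {V : Type*} (G : SimpleGraph V) (S : Finset V) (h : V) : Prop where
  split : SplitBy G S
  notMem : h ∉ S
  adj : ∀ b ∈ S, G.Adj b h
  unique : ∀ b ∈ S, ∀ c ∈ S, b ≠ c → ∀ a, G.Adj b a → G.Adj c a → a = h

section Moments

variable {V : Type*} [Fintype V] {G : SimpleGraph V} {S : Finset V}

lemma adjMat_apply [DecidableRel G.Adj] (x y : V) :
    adjMat G x y = if G.Adj x y then 1 else 0 := by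
  simp only [adjMat, Matrix.of_apply]
  congr

lemma adjMat_symm (x y : V) : adjMat G x y = adjMat G y x := by
  classical
  simp [adjMat_apply, G.adj_comm]

lemma SplitBy.adjMat_eq_zero (hS : SplitBy G S) {x y : V} (h : x ∈ S ↔ y ∈ S) :
    adjMat G x y = 0 := by
  classical
  rw [adjMat_apply, if_neg]
  intro hxy
  have := hS hxy
  tauto

variable [DecidableEq V]

lemma adjMat_pow_symm (k : ℕ) (x y : V) : (adjMat G ^ k) x y = (adjMat G ^ k) y x := by
  have h : (adjMat G).transpose = adjMat G := by
    ext x y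
    exact adjMat_symm y x
  conv_lhs => rw [← h, ← Matrix.transpose_pow]
  rfl

lemma SplitBy.pow_eq_zero (hS : SplitBy G S) (k : ℕ) (x y : V)
    (h : (x ∈ S ↔ y ∈ S) ↔ ¬ Even k) : (adjMat G ^ k) x y = 0 := by
  induction k generalizing y with
  | zero =>
    have hxy : x ≠ y := by
      rintro rfl
      simp at h
    simp [hxy]
  | succ k ih =>
    rw [pow_succ, Matrix.mul_apply]
    refine Finset.sum_eq_zero fun z _ => ?_
    rw [Nat.even_add_one] at h
    by_cases hz : z ∈ S ↔ y ∈ S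
    · rw [hS.adjMat_eq_zero hz, mul_zero]
    · rw [ih z (by tauto), zero_mul]

lemma spectralMoment_zero : spectralMoment G 0 = Fintype.card V := by
  simp [spectralMoment]

lemma SplitBy.spectralMoment_odd (hS : SplitBy G S) {k : ℕ} (hk : Odd k) :
    spectralMoment G k = 0 :=
  Finset.sum_eq_zero fun x _ => hS.pow_eq_zero k x x (by simpa using hk)

lemma SplitBy.spectralMoment_succ (hS : SplitBy G S) (k : ℕ) :
    spectralMoment G (k + 1) = 2 * ∑ b ∈ S, (adjMat G ^ (k + 1)) b b := by
  have key : ∑ b ∈ Sᶜ, (adjMat G ^ (k + 1)) b b = ∑ b ∈ S, (adjMat G ^ (k + 1)) b b := by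
    have h1 : ∀ b ∈ Sᶜ, (adjMat G ^ (k + 1)) b b
        = ∑ c ∈ S, (adjMat G ^ k) b c * adjMat G c b := by
      intro b hb
      rw [pow_succ, Matrix.mul_apply]
      refine (Finset.sum_subset (Finset.subset_univ _) fun c _ hc => ?_).symm
      rw [hS.adjMat_eq_zero (by simp_all), mul_zero]
    have h2 : ∀ c ∈ S, (adjMat G ^ (k + 1)) c c
        = ∑ b ∈ Sᶜ, (adjMat G ^ k) b c * adjMat G c b := by
      intro c hc
      rw [pow_succ', Matrix.mul_apply]
      simp_rw [mul_comm (adjMat G c _)]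
      refine (Finset.sum_subset (Finset.subset_univ _) fun b _ hb => ?_).symm
      rw [hS.adjMat_eq_zero (by simp_all), mul_zero]
    rw [Finset.sum_congr rfl h1, Finset.sum_congr rfl h2, Finset.sum_comm]
  have : spectralMoment G (k + 1) = ∑ b, (adjMat G ^ (k + 1)) b b := rfl
  rw [this, ← Finset.sum_add_sum_compl S, key]
  ring

lemma adjMat_sq_apply [DecidableRel G.Adj] (x y : V) :
    (adjMat G ^ 2) x y = ((G.neighborFinset x ∩ G.neighborFinset y).card : ℝ) := by
  rw [sq, Matrix.mul_apply]
  simp only [adjMat_apply, ← ite_and, mul_ite, mul_one, mul_zero]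
  rw [Finset.sum_boole]
  congr 2
  ext z
  simp [G.adj_comm z y, and_comm]

lemma adjMat_sq_self [DecidableRel G.Adj] (x : V) : (adjMat G ^ 2) x x = G.degree x := by
  simp [adjMat_sq_apply]

lemma SplitBy.spectralMoment_two [DecidableRel G.Adj] (hS : SplitBy G S) :
    spectralMoment G 2 = 2 * ∑ b ∈ S, (G.degree b : ℝ) := by
  rw [hS.spectralMoment_succ 1]
  simp [adjMat_sq_self]

/-- The fourth spectral moment of a graph without 4-cycles. -/
lemma spectralMoment_four [DecidableRel G.Adj]
    (hG : ∀ x y a b, x ≠ y → G.Adj x a → G.Adj y a → G.Adj x b → G.Adj y b → a = b) :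
    spectralMoment G 4 = ∑ x, (2 * (G.degree x : ℝ) ^ 2 - G.degree x) := by
  have h01 : ∀ x y, ((adjMat G ^ 2) x y) * ((adjMat G ^ 2) x y)
      = (adjMat G ^ 2) x y + if x = y then (G.degree x : ℝ) ^ 2 - G.degree x else 0 := by
    intro x y
    split_ifs with hxy
    · subst hxy
      rw [adjMat_sq_self]
      ring
    · have hc : (G.neighborFinset x ∩ G.neighborFinset y).card ≤ 1 := by
        rw [Finset.card_le_one]
        intro a ha b hb
        simp only [Finset.mem_inter, mem_neighborFinset] at ha hb
        exact hG x y a b hxy ha.1 ha.2 hb.1 hb.2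
      rw [adjMat_sq_apply]
      interval_cases (G.neighborFinset x ∩ G.neighborFinset y).card <;> simp
  have hrow : ∀ z, ∑ x, adjMat G x z = G.degree z := by
    intro z
    simp only [adjMat_apply, Finset.sum_boole, G.adj_comm _ z]
    congr 1
    rw [← card_neighborFinset_eq_degree]
    congr 1
    ext
    simp
  have hall : ∑ x, ∑ y, (adjMat G ^ 2) x y = ∑ z, (G.degree z : ℝ) ^ 2 := by
    simp_rw [sq (adjMat G), Matrix.mul_apply]
    calc ∑ x, ∑ y, ∑ z, adjMat G x z * adjMat G z y
        = ∑ z, (∑ x, adjMat G x z) * ∑ y, adjMat G y z := by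
          simp_rw [Finset.sum_mul_sum]
          rw [Finset.sum_comm_cycle]
          refine Finset.sum_congr rfl fun z _ => ?_
          refine Finset.sum_congr rfl fun x _ => Finset.sum_congr rfl fun y _ => ?_
          rw [adjMat_symm y z]
      _ = _ := by
          simp_rw [hrow]
          exact Finset.sum_congr rfl fun z _ => (sq _).symm
  have htr : spectralMoment G 4 = ∑ x, ∑ y, ((adjMat G ^ 2) x y) * ((adjMat G ^ 2) x y) := by
    have : spectralMoment G 4 = ∑ x, (adjMat G ^ 4) x x := rfl
    rw [this, show (4 : ℕ) = 2 + 2 from rfl, pow_add]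
    refine Finset.sum_congr rfl fun x _ => ?_
    rw [Matrix.mul_apply]
    exact Finset.sum_congr rfl fun y _ => by rw [adjMat_pow_symm 2 y x]
  rw [htr]
  simp_rw [h01, Finset.sum_add_distrib, hall]
  simp only [Finset.sum_ite_eq, Finset.mem_univ, if_true]
  rw [← Finset.sum_add_distrib]
  exact Finset.sum_congr rfl fun x _ => by ring

lemma IsHub.sq_apply [DecidableRel G.Adj] {h : V} (hG : IsHub G S h) {b c : V} (hb : b ∈ S)
    (hc : c ∈ S) :
    (adjMat G ^ 2) b c = 1 + if b = c then (G.degree b : ℝ) - 1 else 0 := by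
  split_ifs with hbc
  · subst hbc
    rw [adjMat_sq_self]
    ring
  · have : G.neighborFinset b ∩ G.neighborFinset c = {h} := by
      ext a
      simp only [Finset.mem_inter, mem_neighborFinset, Finset.mem_singleton]
      constructor
      · exact fun ⟨h1, h2⟩ => hG.unique b hb c hc hbc a h1 h2
      · rintro rfl
        exact ⟨hG.adj b hb, hG.adj c hc⟩
    simp [adjMat_sq_apply, this]

lemma SplitBy.mul_sq_apply (hS : SplitBy G S) (M : Matrix V V ℝ) {b : V} (c : V) (hb : b ∈ S) :
    (adjMat G ^ 2 * M) b c = ∑ d ∈ S, (adjMat G ^ 2) b d * M d c := by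
  rw [Matrix.mul_apply]
  refine (Finset.sum_subset (Finset.subset_univ _) fun d _ hd => ?_).symm
  rw [hS.pow_eq_zero 2 b d (by simp [hb, hd, even_two]), zero_mul]

lemma IsHub.pow_four_apply [DecidableRel G.Adj] {h : V} (hG : IsHub G S h) {b c : V} (hb : b ∈ S)
    (hc : c ∈ S) :
    (adjMat G ^ 4) b c = S.card + ((G.degree b : ℝ) - 1) + ((G.degree c : ℝ) - 1)
      + if b = c then ((G.degree b : ℝ) - 1) ^ 2 else 0 := by
  rw [show (4 : ℕ) = 2 + 2 from rfl, pow_add, hG.split.mul_sq_apply _ c hb,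
    Finset.sum_congr rfl fun d hd => by rw [hG.sq_apply hb hd, hG.sq_apply hd hc]]
  simp only [add_mul, mul_add, one_mul, mul_one, Finset.sum_add_distrib, ite_mul, zero_mul,
    mul_ite, mul_zero, Finset.sum_ite_eq, Finset.sum_ite_eq', hb, hc, if_true]
  simp only [Finset.sum_const, nsmul_eq_mul, mul_one]
  split_ifs with hbc
  · subst hbc
    ring
  · ring

lemma IsHub.spectralMoment_four [DecidableRel G.Adj] {h : V} (hG : IsHub G S h) :
    spectralMoment G 4 = 2 * ((S.card : ℝ) ^ 2 + 2 * ∑ b ∈ S, ((G.degree b : ℝ) - 1)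
      + ∑ b ∈ S, ((G.degree b : ℝ) - 1) ^ 2) := by
  rw [hG.split.spectralMoment_succ 3,
    Finset.sum_congr rfl fun b hb => hG.pow_four_apply hb hb]
  simp only [if_true, Finset.sum_add_distrib, Finset.sum_const, nsmul_eq_mul]
  ring

lemma IsHub.spectralMoment_six [DecidableRel G.Adj] {h : V} (hG : IsHub G S h) :
    spectralMoment G 6 = 2 * ((S.card : ℝ) ^ 3 + 3 * S.card * ∑ b ∈ S, ((G.degree b : ℝ) - 1)
      + 3 * ∑ b ∈ S, ((G.degree b : ℝ) - 1) ^ 2 + ∑ b ∈ S, ((G.degree b : ℝ) - 1) ^ 3) := by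
  rw [hG.split.spectralMoment_succ 5]
  have hdiag : ∀ b ∈ S, (adjMat G ^ 6) b b = (S.card : ℝ) ^ 2
      + S.card * ((G.degree b : ℝ) - 1) + ∑ d ∈ S, ((G.degree d : ℝ) - 1)
      + S.card * ((G.degree b : ℝ) - 1)
      + 3 * ((G.degree b : ℝ) - 1) ^ 2 + ((G.degree b : ℝ) - 1) ^ 3 := by
    intro b hb
    rw [show (6 : ℕ) = 2 + 4 from rfl, pow_add, hG.split.mul_sq_apply _ b hb,
      Finset.sum_congr rfl fun d hd => by rw [hG.sq_apply hb hd, hG.pow_four_apply hd hb]]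
    simp only [add_mul, mul_add, one_mul, Finset.sum_add_distrib, ite_mul, zero_mul,
      mul_ite, mul_zero, Finset.sum_ite_eq, Finset.sum_ite_eq', hb, if_true]
    simp only [Finset.sum_const, nsmul_eq_mul]
    ring
  rw [Finset.sum_congr rfl hdiag]
  simp only [Finset.sum_add_distrib, Finset.sum_const, nsmul_eq_mul, ← Finset.mul_sum]
  ring

end Moments

section SumsOfSquares

variable {ι : Type*} {B : Finset ι} {x : ι → ℕ}

lemma exists_erase_pos [DecidableEq ι] {s : ℕ} (hs : ∑ b ∈ B, x b = s) {v : ι} (hv : v ∈ B)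
    (hlt : x v < s) : ∃ w ∈ B, w ≠ v ∧ 0 < x w := by
  by_contra! hcon
  rw [← Finset.add_sum_erase B x hv, Finset.sum_eq_zero (s := B.erase v)] at hs
  · omega
  · intro w hw
    rw [Finset.mem_erase] at hw
    exact Nat.le_zero.mp (hcon w hw.2 hw.1)

lemma sum_sq_le_of_forall_le {t : ℕ} (hs : ∑ b ∈ B, x b = t + 1) (hle : ∀ b ∈ B, x b ≤ t) :
    ∑ b ∈ B, x b ^ 2 ≤ t ^ 2 + 1 := by
  classical
  obtain ⟨v, hv, hv0⟩ : ∃ v ∈ B, 0 < x v := by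
    by_contra! hcon
    rw [Finset.sum_eq_zero fun b hb => Nat.le_zero.mp (hcon b hb)] at hs
    omega
  obtain ⟨w, hw, hwv, hw0⟩ := exists_erase_pos hs hv (Nat.lt_succ_of_le (hle v hv))
  have hpos : ∀ b ∈ B, 0 < x b → (t : ℤ) ≤ x b * (t + 1 - x b) := by
    intro b hb h0
    have h1 : (1 : ℤ) ≤ x b := by exact_mod_cast h0
    have h2 : (x b : ℤ) ≤ t := by exact_mod_cast hle b hb
    nlinarith
  have hsub : ∑ b ∈ {v, w}, (x b : ℤ) * (t + 1 - x b) ≤ ∑ b ∈ B, (x b : ℤ) * (t + 1 - x b) := by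
    refine Finset.sum_le_sum_of_subset_of_nonneg ?_ fun b hb _ => ?_
    · intro b hb
      rcases Finset.mem_insert.mp hb with rfl | hb
      · exact hv
      · rwa [Finset.mem_singleton.mp hb]
    · have h2 : (x b : ℤ) ≤ t := by exact_mod_cast hle b hb
      exact mul_nonneg (by positivity) (by linarith)
  rw [Finset.sum_pair hwv.symm] at hsub
  have hexp : ∑ b ∈ B, (x b : ℤ) * (t + 1 - x b) = (t + 1) ^ 2 - ∑ b ∈ B, (x b : ℤ) ^ 2 := by
    have hs' : ∑ b ∈ B, (x b : ℤ) = t + 1 := by exact_mod_cast hs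
    rw [sq (t + 1 : ℤ)]
    nth_rw 2 [← hs']
    rw [Finset.sum_mul, ← Finset.sum_sub_distrib]
    exact Finset.sum_congr rfl fun b _ => by ring
  have := hpos v hv hv0
  have := hpos w hw hw0
  zify
  nlinarith

lemma sum_sq_le_of_forall_ne {t : ℕ} (hs : ∑ b ∈ B, x b = t + 1) (hne : ∀ b ∈ B, x b ≠ t + 1) :
    ∑ b ∈ B, x b ^ 2 ≤ t ^ 2 + 1 :=
  sum_sq_le_of_forall_le hs fun b hb => by
    have h1 : x b ≤ ∑ b ∈ B, x b := Finset.single_le_sum_of_canonicallyOrdered hb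
    have h2 := hne b hb
    omega

lemma sum_sq_lt_of_forall_le {t : ℕ} (ht : 1 ≤ t) (hs : ∑ b ∈ B, x b = t + 2)
    (hle : ∀ b ∈ B, x b ≤ t)
    (hne : ∀ v ∈ B, ∀ w ∈ B, v ≠ w → ¬ (x v = t ∧ x w = 2)) :
    ∑ b ∈ B, x b ^ 2 < t ^ 2 + 4 := by
  classical
  have hB : B.Nonempty := by
    rw [Finset.nonempty_iff_ne_empty]
    rintro rfl
    simp at hs
  obtain ⟨v, hv, hmax⟩ := Finset.exists_max_image B x hB
  have hrest : x v + ∑ b ∈ B.erase v, x b = t + 2 := by rw [Finset.add_sum_erase B x hv, hs]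
  obtain ⟨r, hr⟩ : ∃ r, r = ∑ b ∈ B.erase v, x b := ⟨_, rfl⟩
  have hbound : ∀ m : ℕ, (∀ b ∈ B.erase v, x b ≤ m) → ∑ b ∈ B, x b ^ 2 ≤ x v ^ 2 + m * r := by
    intro m hm
    rw [← Finset.add_sum_erase B (fun b => x b ^ 2) hv, hr, Finset.mul_sum]
    gcongr with b hb
    rw [sq]
    exact Nat.mul_le_mul_right _ (hm b hb)
  have hr1 : ∀ b ∈ B.erase v, x b ≤ r := fun b hb =>
    hr ▸ Finset.single_le_sum_of_canonicallyOrdered hb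
  have hr2 : ∀ b ∈ B.erase v, x b ≤ x v := fun b hb => hmax b (Finset.mem_of_mem_erase hb)
  rw [← hr] at hrest
  have hvt := hle v hv
  rcases Nat.lt_or_ge r 3 with h3 | h3
  · have hvt' : x v = t := by omega
    have hb := hbound 1 fun b hb => by
      have h1 := hr1 b hb
      have h2 : x b ≠ 2 := fun h2 => hne v hv b (Finset.mem_of_mem_erase hb)
        (Finset.ne_of_mem_erase hb).symm ⟨hvt', h2⟩
      omega
    rw [hvt'] at hb
    omega
  · obtain rfl : t = x v + r - 2 := by omega
    generalize x v = M at *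
    obtain ⟨k, rfl⟩ : ∃ k, r = k + 3 := ⟨r - 3, by omega⟩
    rw [show M + (k + 3) - 2 = M + k + 1 by omega]
    rcases Nat.lt_or_ge M (k + 3) with hM | hM
    · refine (hbound M hr2).trans_lt ?_
      rcases k with _ | k
      · interval_cases M <;> norm_num
      · nlinarith
    · refine (hbound (k + 3) hr1).trans_lt ?_
      obtain ⟨l, rfl⟩ : ∃ l, M = k + 3 + l := ⟨M - (k + 3), by omega⟩
      nlinarith

end SumsOfSquares

/-- Adjacency between the vertex classes of a tree of diameter at most four in which at most two
neighbors of the center are not leaves: the center `0`, two distinguished neighbors `1` and `2` of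
the center, its other neighbors `3`, the leaves `4` hanging from `1` and the leaves `5` hanging
from `2`. -/
def classAdj (i j : Fin 6) : Bool :=
  (i, j) ∈ ([(0, 1), (1, 0), (0, 2), (2, 0), (0, 3), (3, 0), (1, 4), (4, 1), (2, 5), (5, 2)] :
    List (Fin 6 × Fin 6))

/-- The classes `key` of the vertices determine adjacency in `G` through `classAdj`, and the class
`i` has `m i` vertices. -/
structure HasShape {V : Type*} [Fintype V] (G : SimpleGraph V) (key : V → Fin 6)
    (m : Fin 6 → ℕ) : Prop where
  adj_iff : ∀ x y, G.Adj x y ↔ classAdj (key x) (key y)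
  card_eq : ∀ i, (Finset.univ.filter fun x => key x = i).card = m i

section Shape

variable {V W : Type*} [Fintype V] [Fintype W] {G : SimpleGraph V} {H : SimpleGraph W}
  {key : V → Fin 6} {key' : W → Fin 6} {m : Fin 6 → ℕ}

lemma HasShape.nonempty_iso (hG : HasShape G key m) (hH : HasShape H key' m) :
    Nonempty (G ≃g H) := by
  classical
  have hfib : ∀ i, Nonempty ({x // key x = i} ≃ {y // key' y = i}) := fun i => by
    rw [← Fintype.card_eq, Fintype.card_subtype, Fintype.card_subtype, hG.card_eq, hH.card_eq]
  have hmap := Equiv.ofFiberEquiv_map fun i => (hfib i).some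
  refine ⟨⟨Equiv.ofFiberEquiv fun i => (hfib i).some, ?_⟩⟩
  intro x y
  rw [hH.adj_iff, hG.adj_iff, hmap, hmap]

lemma HasShape.sum_key {R : Type*} [Semiring R] (hG : HasShape G key m) (F : Fin 6 → R) :
    ∑ x, F (key x) = ∑ i, (m i : R) * F i := by
  classical
  rw [← Finset.sum_fiberwise Finset.univ key]
  refine Finset.sum_congr rfl fun i _ => ?_
  rw [Finset.sum_congr rfl (g := fun _ => F i) fun x hx => by rw [(Finset.mem_filter.mp hx).2],
    Finset.sum_const, hG.card_eq, nsmul_eq_mul]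

lemma HasShape.degree_eq [DecidableRel G.Adj] (hG : HasShape G key m) (x : V) :
    G.degree x = ∑ i, m i * if classAdj (key x) i then 1 else 0 := by
  have h := hG.sum_key (R := ℕ) fun i => if classAdj (key x) i then 1 else 0
  rw [← card_neighborFinset_eq_degree, neighborFinset_eq_filter, Finset.card_filter]
  simp_rw [hG.adj_iff]
  simpa using h

/-- The neighbors of the center form one of the two parts. -/
def midLevel (key : V → Fin 6) : Finset V :=
  Finset.univ.filter fun x => key x ∈ ({1, 2, 3} : Finset (Fin 6))

lemma HasShape.sum_midLevel {c a b : ℕ} (hG : HasShape G key ![1, 1, 1, c, a, b])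
    [DecidableRel G.Adj] (f : ℕ → ℝ) :
    ∑ x ∈ midLevel key, f (G.degree x) = f (a + 1) + f (b + 1) + c * f 1 := by
  rw [midLevel, Finset.sum_filter]
  simp_rw [hG.degree_eq]
  rw [hG.sum_key fun i => if i ∈ ({1, 2, 3} : Finset (Fin 6)) then
    f (∑ j, (![1, 1, 1, c, a, b] : Fin 6 → ℕ) j * if classAdj i j then 1 else 0) else 0]
  simp [Fin.sum_univ_six, classAdj, add_comm 1]

lemma HasShape.exists_isHub (hG : HasShape G key m) (hm0 : m 0 = 1) (hm1 : m 1 = 1)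
    (hm2 : m 2 = 1) :
    ∃ h, IsHub G (midLevel key) h := by
  classical
  have h0 := hG.card_eq 0
  rw [hm0, Finset.card_eq_one] at h0
  obtain ⟨h, hh⟩ := h0
  have hkey : ∀ x, key x = 0 ↔ x = h := fun x => by
    simpa using Finset.ext_iff.mp hh x
  have hone : ∀ i, m i = 1 → ∀ x y, key x = i → key y = i → x = y := by
    intro i hi x y hx hy
    exact Finset.card_le_one.mp ((hG.card_eq i).trans hi).le x (by simpa using hx) y
      (by simpa using hy)
  refine ⟨h, ⟨?_, ?_, ?_, ?_⟩⟩
  · intro x y hxy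
    rw [hG.adj_iff] at hxy
    simp only [midLevel, Finset.mem_filter, Finset.mem_univ, true_and]
    generalize key x = i at *
    generalize key y = j at *
    revert i j
    decide
  · simp [midLevel, (hkey h).mpr rfl]
  · intro b hb
    rw [hG.adj_iff, (hkey h).mpr rfl]
    simp only [midLevel, Finset.mem_filter, Finset.mem_univ, true_and] at hb
    generalize key b = i at *
    revert i
    decide
  · intro b hb c hc hbc a hba hca
    rw [hG.adj_iff] at hba hca
    have h1 := hone 1 hm1 b c
    have h2 := hone 2 hm2 b c
    rw [← hkey]
    simp only [midLevel, Finset.mem_filter, Finset.mem_univ, true_and] at hb hc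
    have hcls : ∀ i j k : Fin 6, i ∈ ({1, 2, 3} : Finset (Fin 6)) →
        j ∈ ({1, 2, 3} : Finset (Fin 6)) →
        classAdj i k → classAdj j k → k = 0 ∨ i = 1 ∧ j = 1 ∨ i = 2 ∧ j = 2 := by decide
    rcases hcls _ _ _ hb hc hba hca with h | ⟨hb1, hc1⟩ | ⟨hb2, hc2⟩
    · exact h
    · exact absurd (h1 hb1 hc1) hbc
    · exact absurd (h2 hb2 hc2) hbc

lemma IsHub.exists_hasShape [DecidableEq V] [DecidableRel G.Adj] {S : Finset V} {h v w : V}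
    (hG : IsHub G S h) (hv : v ∈ S) (hw : w ∈ S) (hvw : v ≠ w)
    (hleaf : ∀ b ∈ S, b ≠ v → b ≠ w → G.degree b = 1) (hpos : ∀ a, 0 < G.degree a) :
    ∃ key, HasShape G key ![1, 1, 1, S.card - 2, G.degree v - 1, G.degree w - 1] := by
  have hin : ∀ x ∈ S, ∀ y ∈ S, ¬ G.Adj x y := fun x hx y hy hxy => (hG.split hxy).mp hx hy
  have hout : ∀ x, x ∉ S → ∀ y, y ∉ S → ¬ G.Adj x y := fun x hx y hy hxy =>
    hx ((hG.split hxy).mpr hy)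
  have hother : ∀ b ∈ S, b ≠ v → b ≠ w → ∀ a, G.Adj b a → a = h := by
    intro b hb hbv hbw a hba
    have hcard := (card_neighborFinset_eq_degree G b).trans (hleaf b hb hbv hbw)
    exact Finset.card_le_one.mp hcard.le a (by simpa using hba) h (by simpa using hG.adj b hb)
  have hleaves : ∀ a, a ∉ S → a ≠ h → (G.Adj w a ↔ ¬ G.Adj v a) := by
    intro a ha hah
    constructor
    · exact fun hwa hva => hah (hG.unique v hv w hw hvw a hva hwa)
    · intro hva
      obtain ⟨b, hab⟩ := (G.degree_pos_iff_exists_adj a).mp (hpos a)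
      have hb : b ∈ S := by
        by_contra hb
        exact hout a ha b hb hab
      by_cases hbw : b = w
      · exact hbw ▸ hab.symm
      by_cases hbv : b = v
      · exact absurd (hbv ▸ hab.symm) hva
      exact absurd (hother b hb hbv hbw a hab.symm) hah
  have hh := hG.notMem
  have hadj := hG.adj
  have hhv : h ≠ v := fun e => hh (e ▸ hv)
  have hhw : h ≠ w := fun e => hh (e ▸ hw)
  refine ⟨fun x => if x = h then 0 else if x = v then 1 else if x = w then 2 else
    if x ∈ S then 3 else if G.Adj v x then 4 else 5, ?_, ?_⟩
  · intro x y
    have hcomm := G.adj_comm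
    split_ifs <;> simp [classAdj] <;> grind
  · intro i
    have hset : ∀ b ∈ S, ((G.neighborFinset b).erase h).card = G.degree b - 1 := fun b hb => by
      rw [Finset.card_erase_of_mem (by simpa using hadj b hb), card_neighborFinset_eq_degree]
    have hmid : ((S.erase v).erase w).card = S.card - 2 := by
      rw [Finset.card_erase_of_mem (Finset.mem_erase.mpr ⟨hvw.symm, hw⟩),
        Finset.card_erase_of_mem hv]
      omega
    fin_cases i
    · exact Finset.card_eq_one.mpr ⟨h, by ext x; simp; grind⟩
    · exact Finset.card_eq_one.mpr ⟨v, by ext x; simp; grind⟩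
    · exact Finset.card_eq_one.mpr ⟨w, by ext x; simp; grind⟩
    · refine Eq.trans (congrArg Finset.card ?_) hmid
      ext x; simp; grind
    · refine Eq.trans (congrArg Finset.card ?_) (hset v hv)
      ext x; simp; grind
    · refine Eq.trans (congrArg Finset.card ?_) (hset w hw)
      ext x; simp; grind

end Shape

lemma card_filter_val_eq {n : ℕ} (P : Fin n → Prop) [DecidablePred P] (s : Finset ℕ)
    (hs : ∀ a, a ∈ s ↔ ∃ h : a < n, P ⟨a, h⟩) :
    (Finset.univ.filter P).card = s.card := by
  rw [← Finset.card_map Fin.valEmbedding]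
  congr 1
  ext a
  rw [hs]
  simp [Fin.exists_iff]

set_option maxHeartbeats 1000000 in
lemma BTree_hasShape {p q k l : ℕ} (hl : l ≤ 1) (hkl : k = 0 ∨ l = 0) (hp : k + l + 1 ≤ p)
    (hq : 3 ≤ q) :
    ∃ key, HasShape (BTree p q k l) key ![1, 1, 1, q - 2, p - 1 - (k + l), k + l] := by
  refine ⟨fun x => if x.val = 0 then 0 else if x.val = 1 then 1 else if x.val = 2 + l then 2 else
    if x.val ≤ q then 3 else if q + k + l < x.val then 4 else 5, ?_, ?_⟩
  · intro x y
    simp only [BTree, fromRel_adj, ne_eq, Fin.ext_iff]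
    have hx := x.isLt
    have hy := y.isLt
    generalize x.val = a at *
    generalize y.val = b at *
    split_ifs <;> simp [classAdj] <;> grind
  · intro i
    fin_cases i
    · refine (card_filter_val_eq _ {0} fun a => ?_).trans (by simp)
      simp; grind
    · refine (card_filter_val_eq _ {1} fun a => ?_).trans (by simp)
      simp; grind
    · refine (card_filter_val_eq _ {2 + l} fun a => ?_).trans (by simp)
      simp; grind
    · refine (card_filter_val_eq _ ((Finset.Icc 2 q).erase (2 + l)) fun a => ?_).trans ?_
      · simp; grind
      · rw [Finset.card_erase_of_mem (by simp; omega)]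
        simp; omega
    · refine (card_filter_val_eq _ (Finset.Ico (q + k + l + 1) (p + q)) fun a => ?_).trans ?_
      · simp; grind
      · simp; omega
    · refine (card_filter_val_eq _ (Finset.Ioc q (q + k + l)) fun a => ?_).trans ?_
      · simp; grind
      · simp; omega

lemma SimpleGraph.IsAcyclic.eq_of_common_neighbors {V : Type*} {G : SimpleGraph V}
    (hG : G.IsAcyclic) {x y a b : V} (hxy : x ≠ y) (hxa : G.Adj x a) (hya : G.Adj y a)
    (hxb : G.Adj x b) (hyb : G.Adj y b) : a = b := by
  have key : ∀ c (hxc : G.Adj x c) (hyc : G.Adj y c),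
      (Walk.cons hxc (Walk.cons hyc.symm Walk.nil)).IsPath := by
    intro c hxc hyc
    simp [Walk.cons_isPath_iff, hxc.ne, hyc.ne', hxy]
  have h := (hG.subsingleton_path x y).elim ⟨_, key a hxa hya⟩ ⟨_, key b hxb hyb⟩
  have hs := congrArg (fun w : G.Path x y => w.1.support) h
  simpa using hs

lemma SplitBy.compl {V : Type*} [Fintype V] [DecidableEq V] {G : SimpleGraph V} {S : Finset V}
    (hS : SplitBy G S) : SplitBy G Sᶜ := fun x y hxy => by
  have := hS hxy
  simp only [Finset.mem_compl]
  tauto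

lemma sum_degree_sub_one {V : Type*} [Fintype V] {G : SimpleGraph V} [DecidableRel G.Adj]
    (hpos : ∀ x, 0 < G.degree x) (S : Finset V) :
    ∑ b ∈ S, (G.degree b - 1) + S.card = ∑ b ∈ S, G.degree b := by
  rw [Finset.card_eq_sum_ones, ← Finset.sum_add_distrib]
  exact Finset.sum_congr rfl fun b _ => Nat.sub_add_cancel (hpos b)

section Tree

variable {V : Type*} [Fintype V] [DecidableEq V] {G : SimpleGraph V} [DecidableRel G.Adj]
  {S : Finset V}

lemma SplitBy.neighborFinset_subset (hS : SplitBy G S) {h : V} (hh : h ∉ S) :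
    G.neighborFinset h ⊆ S := fun b hb => by
  rw [mem_neighborFinset] at hb
  by_contra hbS
  exact hh ((hS hb).mpr hbS)

lemma SplitBy.degree_le (hS : SplitBy G S) {h : V} (hh : h ∉ S) : G.degree h ≤ S.card := by
  rw [← card_neighborFinset_eq_degree]
  exact Finset.card_le_card (hS.neighborFinset_subset hh)

lemma SplitBy.isHub (hS : SplitBy G S) (hG : G.IsAcyclic) {h : V} (hh : h ∉ S)
    (hd : G.degree h = S.card) : IsHub G S h := by
  have hN : G.neighborFinset h = S :=
    Finset.eq_of_subset_of_card_le (hS.neighborFinset_subset hh)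
      (by rw [card_neighborFinset_eq_degree, hd])
  have hadj : ∀ b ∈ S, G.Adj b h := fun b hb => by
    rw [← hN, mem_neighborFinset] at hb
    exact hb.symm
  exact ⟨hS, hh, hadj, fun b hb c hc hbc a hba hca =>
    hG.eq_of_common_neighbors hbc hba hca (hadj b hb) (hadj c hc)⟩

lemma SplitBy.sum_degree (hS : SplitBy G S) (hG : G.IsTree) :
    ∑ b ∈ S, G.degree b + 1 = Fintype.card V := by
  have hb : G.IsBipartiteWith (S : Set V) (Sᶜ : Finset V) := by
    refine ⟨?_, fun x y hxy => ?_⟩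
    · rw [Finset.disjoint_coe]
      exact disjoint_compl_right
    · have := hS hxy
      simp only [Finset.mem_coe, Finset.mem_compl]
      tauto
  rw [isBipartiteWith_sum_degrees_eq_card_edges hb, hG.card_edgeFinset]

lemma IsHub.nonempty_iso_BTree {p q k l : ℕ} {T : SimpleGraph (Fin (p + q))}
    [DecidableRel T.Adj] {B : Finset (Fin (p + q))} {u v w : Fin (p + q)} (hT : IsHub T B u)
    (hpos : ∀ x, 0 < T.degree x) (hB : B.card = q) (hsum : ∑ b ∈ B, (T.degree b - 1) = p - 1)
    (hl : l ≤ 1) (hkl : k = 0 ∨ l = 0) (hp : k + l + 1 ≤ p) (hq : 3 ≤ q)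
    (hv : v ∈ B) (hw : w ∈ B) (hvw : v ≠ w) (hdv : T.degree v - 1 = p - 1 - (k + l))
    (hdw : T.degree w - 1 = k + l) : Nonempty (T ≃g BTree p q k l) := by
  have hrest : ∑ b ∈ (B.erase v).erase w, (T.degree b - 1) = 0 := by
    have h1 := Finset.add_sum_erase B (fun b => T.degree b - 1) hv
    have h2 := Finset.add_sum_erase (B.erase v) (fun b => T.degree b - 1)
      (Finset.mem_erase.mpr ⟨hvw.symm, hw⟩)
    omega
  rw [Finset.sum_eq_zero_iff] at hrest
  obtain ⟨key, hkey⟩ := hT.exists_hasShape hv hw hvw (fun b hb hbv hbw => by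
    have h1 := hrest b (by simp [hb, hbv, hbw])
    have h2 := hpos b
    omega) hpos
  obtain ⟨key', hkey'⟩ := BTree_hasShape hl hkl hp hq
  rw [hB, hdv, hdw] at hkey
  exact hkey.nonempty_iso hkey'

end Tree

lemma BTree_moments {p q : ℕ} (hp : 4 ≤ p) (hq : 3 ≤ q) :
    ∃ S, SplitBy (BTree p q 2 0) S ∧
      spectralMoment (BTree p q 2 0) 2 = 2 * ((p : ℝ) + q - 1) ∧
      spectralMoment (BTree p q 2 0) 4 =
        2 * ((q : ℝ) ^ 2 + 2 * (p - 1) + ((p - 3) ^ 2 + 4)) ∧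
      spectralMoment (BTree p q 2 0) 6 =
        2 * ((q : ℝ) ^ 3 + 3 * q * (p - 1) + 3 * ((p - 3) ^ 2 + 4) + ((p - 3) ^ 3 + 8)) := by
  classical
  obtain ⟨key, hkey⟩ := BTree_hasShape (p := p) (q := q) (k := 2) (l := 0) (by omega) (by omega)
    (by omega) hq
  obtain ⟨h, hh⟩ := hkey.exists_isHub rfl rfl rfl
  have hc2 : ((q - 2 : ℕ) : ℝ) = q - 2 := by
    rw [Nat.cast_sub (by omega)]
    norm_num
  have hc3 : ((p - 1 - (2 + 0) : ℕ) : ℝ) = p - 3 := by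
    rw [show p - 1 - (2 + 0) = p - 3 by omega, Nat.cast_sub (by omega)]
    norm_num
  have hcard : ((midLevel key).card : ℝ) = q := by
    have := hkey.sum_midLevel fun _ => 1
    simp only [Finset.sum_const, nsmul_eq_mul, mul_one, hc2] at this
    linarith
  have h0 := hkey.sum_midLevel fun d => (d : ℝ)
  have h1 := hkey.sum_midLevel fun d => ((d : ℝ) - 1)
  have h2 := hkey.sum_midLevel fun d => ((d : ℝ) - 1) ^ 2
  have h3 := hkey.sum_midLevel fun d => ((d : ℝ) - 1) ^ 3
  push_cast [hc2] at h0 h1 h2 h3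
  rw [hc3] at h0 h1 h2 h3
  refine ⟨midLevel key, hh.split, ?_, ?_, ?_⟩
  · rw [hh.split.spectralMoment_two, h0]
    ring
  · rw [hh.spectralMoment_four, hcard, h1, h2]
    ring
  · rw [hh.spectralMoment_six, hcard, h1, h2, h3]
    ring

section Comparison

variable {p q : ℕ} {T : SimpleGraph (Fin (p + q))} {A : Finset (Fin (p + q))}

lemma SplitBy.moments_eq_BTree (hp : 4 ≤ p) (hq : 3 ≤ q) (hA : SplitBy T A) (hT : T.IsTree) :
    ∀ i < 6, i ≠ 4 → spectralMoment T i = spectralMoment (BTree p q 2 0) i := by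
  classical
  obtain ⟨S, hS, hB2, -, -⟩ := BTree_moments hp hq
  have hodd : ∀ i, Odd i → spectralMoment T i = spectralMoment (BTree p q 2 0) i := fun i hi => by
    rw [hA.spectralMoment_odd hi, hS.spectralMoment_odd hi]
  intro i hi hi4
  interval_cases i
  · rw [spectralMoment_zero, spectralMoment_zero]
  · exact hodd 1 (by decide)
  · have hsum : (∑ b ∈ A, (T.degree b : ℝ)) + 1 = p + q := by
      exact_mod_cast (hA.sum_degree hT).trans (Fintype.card_fin _)
    rw [hB2, hA.spectralMoment_two]
    linarith
  · exact hodd 3 (by decide)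
  · exact absurd rfl hi4
  · exact hodd 5 (by decide)

lemma SplitBy.slt_of_four (hp : 4 ≤ p) (hq : 3 ≤ q) (hA : SplitBy T A) (hT : T.IsTree)
    (h4 : spectralMoment T 4 < spectralMoment (BTree p q 2 0) 4) : SLt T (BTree p q 2 0) :=
  ⟨4, by norm_num, by simp; omega,
    fun i hi => hA.moments_eq_BTree hp hq hT i (by omega) (by omega), h4⟩

lemma SplitBy.slt_of_six (hp : 4 ≤ p) (hq : 3 ≤ q) (hA : SplitBy T A) (hT : T.IsTree)
    (h4 : spectralMoment T 4 = spectralMoment (BTree p q 2 0) 4)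
    (h6 : spectralMoment T 6 < spectralMoment (BTree p q 2 0) 6) : SLt T (BTree p q 2 0) :=
  ⟨6, by norm_num, by simp; omega, fun i hi => by
    by_cases hi4 : i = 4
    · rw [hi4, h4]
    · exact hA.moments_eq_BTree hp hq hT i hi hi4, h6⟩

/-- A vertex of the smaller part is adjacent to all of the larger part. -/
lemma IsHub.slt_BTree [DecidableRel T.Adj] {B : Finset (Fin (p + q))} {u : Fin (p + q)}
    (hp : 4 ≤ p) (hq : 3 ≤ q) (hT : T.IsTree) (hub : IsHub T B u) (hB : B.card = q)
    (hpos : ∀ x, 0 < T.degree x) (hsum : ∑ b ∈ B, (T.degree b - 1) = p - 1)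
    (h0 : ¬ Nonempty (T ≃g BTree p q 0 0)) (h1 : ¬ Nonempty (T ≃g BTree p q 0 1))
    (h2 : ¬ Nonempty (T ≃g BTree p q 2 0)) : SLt T (BTree p q 2 0) := by
  have hx0 : ∀ v ∈ B, T.degree v - 1 ≠ p - 1 := by
    intro v hv hdv
    obtain ⟨w, hw⟩ : (B.erase v).Nonempty := by
      rw [← Finset.card_pos, Finset.card_erase_of_mem hv]
      omega
    have hadd := Finset.add_sum_erase B (fun b => T.degree b - 1) hv
    have hle : T.degree w - 1 ≤ ∑ b ∈ B.erase v, (T.degree b - 1) :=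
      Finset.single_le_sum_of_canonicallyOrdered (f := fun b => T.degree b - 1) hw
    rw [Finset.mem_erase] at hw
    exact h0 (hub.nonempty_iso_BTree hpos hB hsum (by omega) (by omega) (by omega) hq hv hw.2
      hw.1.symm (by omega) (by omega))
  have hle : ∀ v ∈ B, T.degree v - 1 ≤ p - 1 := fun v hv => by
    rw [← hsum]
    exact Finset.single_le_sum_of_canonicallyOrdered (f := fun b => T.degree b - 1) hv
  have hx1 : ∀ v ∈ B, T.degree v - 1 ≠ p - 2 := by
    intro v hv hdv
    obtain ⟨w, hw, hwv, hw0⟩ := exists_erase_pos hsum hv (by omega)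
    have hadd := Finset.add_sum_erase B (fun b => T.degree b - 1) hv
    have hle : T.degree w - 1 ≤ ∑ b ∈ B.erase v, (T.degree b - 1) :=
      Finset.single_le_sum_of_canonicallyOrdered (f := fun b => T.degree b - 1)
        (Finset.mem_erase.mpr ⟨hwv, hw⟩)
    exact h1 (hub.nonempty_iso_BTree hpos hB hsum (by omega) (by omega) (by omega) hq hv hw
      hwv.symm (by omega) (by omega))
  have hsq : ∑ b ∈ B, (T.degree b - 1) ^ 2 < (p - 3) ^ 2 + 4 := by
    refine sum_sq_lt_of_forall_le (by omega) (by omega) (fun v hv => ?_) fun v hv w hw hvw hd => ?_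
    · have := hx0 v hv
      have := hx1 v hv
      have := hle v hv
      omega
    · exact h2 (hub.nonempty_iso_BTree hpos hB hsum (by omega) (by omega) (by omega) hq hv hw
        hvw (by omega) (by omega))
  obtain ⟨-, -, -, h4, -⟩ := BTree_moments hp hq
  refine hub.split.slt_of_four hp hq hT ?_
  have hcast : ∀ b, ((T.degree b : ℝ) - 1) = ((T.degree b - 1 : ℕ) : ℝ) := fun b => by
    rw [Nat.cast_sub (hpos b)]
    norm_num
  rw [h4, hub.spectralMoment_four, hB]
  simp_rw [hcast]
  have hsum' : (∑ b ∈ B, ((T.degree b - 1 : ℕ) : ℝ)) = p - 1 := by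
    rw [← Nat.cast_sum, hsum, Nat.cast_sub (by omega)]
    norm_num
  have hsq' : (∑ b ∈ B, ((T.degree b - 1 : ℕ) : ℝ) ^ 2) < (p - 3) ^ 2 + 4 := by
    have h3 : ((p - 3 : ℕ) : ℝ) = p - 3 := by
      rw [Nat.cast_sub (by omega)]
      norm_num
    rw [← h3]
    exact_mod_cast hsq
  rw [hsum']
  linarith

end Comparison

/-- For `4 ≤ p < q`, `n = p + q` and `2p ≤ q + 4`, every tree
`T ∈ 𝒯_n^{p,q}` isomorphic to none of `B_{p,q}^{0,0}`, `B_{p,q}^{0,1}`,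
`B_{p,q}^{2,0}` satisfies `T ≺_s B_{p,q}^{2,0}`: in this case `B_{p,q}^{2,0}` is the
unique third last tree in the S-order among `𝒯_n^{p,q}`. -/
theorem stmt_6 (p q : ℕ) (hp : 4 ≤ p) (hpq : p < q) (h : 2 * p ≤ q + 4)
    (T : SimpleGraph (Fin (p + q))) (hT : TreeBip p q T)
    (h0 : ¬ Nonempty (T ≃g BTree p q 0 0))
    (h1 : ¬ Nonempty (T ≃g BTree p q 0 1))
    (h2 : ¬ Nonempty (T ≃g BTree p q 2 0)) :
    SLt T (BTree p q 2 0) := by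
  classical
  obtain ⟨hT, A, hA, hsplit⟩ := hT
  replace hsplit : SplitBy T A := hsplit
  have hq : 3 ≤ q := by omega
  have hB : Aᶜ.card = q := by
    rw [Finset.card_compl, hA, Fintype.card_fin]
    omega
  have : Nontrivial (Fin (p + q)) := Fin.nontrivial_iff_two_le.mpr (by omega)
  have hpos : ∀ x, 0 < T.degree x := fun x =>
    hT.connected.preconnected.degree_pos_of_nontrivial x
  have hsumA : ∑ b ∈ A, (T.degree b - 1) = q - 1 := by
    have e1 := hsplit.sum_degree hT
    have e2 := sum_degree_sub_one hpos A
    rw [Fintype.card_fin] at e1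
    omega
  have hsumB : ∑ b ∈ Aᶜ, (T.degree b - 1) = p - 1 := by
    have e1 := hsplit.compl.sum_degree hT
    have e2 := sum_degree_sub_one hpos Aᶜ
    rw [Fintype.card_fin] at e1
    omega
  by_cases hu : ∃ u ∈ A, T.degree u = q
  · obtain ⟨u, huA, hu⟩ := hu
    exact (hsplit.compl.isHub hT.isAcyclic (by simpa using huA) (by omega)).slt_BTree hp hq hT hB
      hpos hsumB h0 h1 h2
  push Not at hu
  have hleA : ∀ a ∈ A, T.degree a - 1 ≤ q - 2 := fun a ha => by
    have e1 := hu a ha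
    have e2 := hsplit.compl.degree_le (h := a) (by simpa using ha)
    omega
  have hsqA : ∑ a ∈ A, (T.degree a - 1) ^ 2 ≤ (q - 2) ^ 2 + 1 :=
    sum_sq_le_of_forall_le (by omega) hleA
  obtain ⟨-, -, -, h4, h6⟩ := BTree_moments hp hq
  have hcast : ∀ b, ((T.degree b - 1 : ℕ) : ℝ) = (T.degree b : ℝ) - 1 := fun b => by
    rw [Nat.cast_sub (hpos b)]
    norm_num
  have hq2 : ((q - 2 : ℕ) : ℝ) = q - 2 := by
    rw [Nat.cast_sub (by omega)]
    norm_num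
  have hsumA' : ∑ a ∈ A, ((T.degree a : ℝ) - 1) = q - 1 := by
    simp_rw [← hcast]
    rw [← Nat.cast_sum, hsumA, Nat.cast_sub (by omega)]
    norm_num
  have hsumB' : ∑ a ∈ Aᶜ, ((T.degree a : ℝ) - 1) = p - 1 := by
    simp_rw [← hcast]
    rw [← Nat.cast_sum, hsumB, Nat.cast_sub (by omega)]
    norm_num
  have hsqA' : ∑ a ∈ A, ((T.degree a : ℝ) - 1) ^ 2 ≤ ((q : ℝ) - 2) ^ 2 + 1 := by
    simp_rw [← hcast, ← hq2]
    exact_mod_cast hsqA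
  have hpR : (4 : ℝ) ≤ p := by exact_mod_cast hp
  have hhR : 2 * (p : ℝ) ≤ q + 4 := by exact_mod_cast h
  by_cases hv : ∃ v ∈ Aᶜ, T.degree v - 1 = p - 2 + 1
  · obtain ⟨v, hvB, hv⟩ := hv
    have hub := hsplit.isHub hT.isAcyclic (h := v) (by simpa using hvB) (by omega)
    have hT4 := hub.spectralMoment_four
    rw [hA, hsumA'] at hT4
    by_cases hlt : spectralMoment T 4 < spectralMoment (BTree p q 2 0) 4
    · exact hsplit.slt_of_four hp hq hT hlt
    have heq : spectralMoment T 4 = spectralMoment (BTree p q 2 0) 4 := by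
      refine le_antisymm ?_ (not_lt.mp hlt)
      rw [hT4, h4]
      nlinarith
    have hqp : (q : ℝ) = 2 * p - 4 := by
      rw [h4, hT4] at hlt
      nlinarith
    have hp5 : (5 : ℝ) ≤ p := by
      have hqp' : q + 4 = 2 * p := by
        have : (q : ℝ) + 4 = 2 * p := by linarith
        exact_mod_cast this
      exact_mod_cast (by omega : 5 ≤ p)
    have hcube : ∑ a ∈ A, ((T.degree a : ℝ) - 1) ^ 3 ≤ ((q : ℝ) - 2) * (((q : ℝ) - 2) ^ 2 + 1) := by
      calc ∑ a ∈ A, ((T.degree a : ℝ) - 1) ^ 3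
          ≤ ∑ a ∈ A, ((q : ℝ) - 2) * ((T.degree a : ℝ) - 1) ^ 2 := by
            refine Finset.sum_le_sum fun a ha => ?_
            have e : (T.degree a : ℝ) - 1 ≤ q - 2 := by
              rw [← hcast, ← hq2]
              exact_mod_cast hleA a ha
            rw [pow_succ']
            gcongr
        _ ≤ _ := by
            rw [← Finset.mul_sum]
            gcongr
            rw [← hq2]
            positivity
    refine hsplit.slt_of_six hp hq hT heq ?_
    rw [h6, hub.spectralMoment_six, hA, hsumA']
    rw [hqp] at hcube hsqA' ⊢
    nlinarith
  · push Not at hv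
    have hsqB : ∑ a ∈ Aᶜ, (T.degree a - 1) ^ 2 ≤ (p - 2) ^ 2 + 1 :=
      sum_sq_le_of_forall_ne (by omega) hv
    have hsqB' : ∑ a ∈ Aᶜ, ((T.degree a : ℝ) - 1) ^ 2 ≤ ((p : ℝ) - 2) ^ 2 + 1 := by
      have hp2 : ((p - 2 : ℕ) : ℝ) = p - 2 := by
        rw [Nat.cast_sub (by omega)]
        norm_num
      simp_rw [← hcast, ← hp2]
      exact_mod_cast hsqB
    refine hsplit.slt_of_four hp hq hT ?_
    have hdeg : ∀ x, 2 * (T.degree x : ℝ) ^ 2 - T.degree x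
        = 2 * ((T.degree x : ℝ) - 1) ^ 2 + 3 * ((T.degree x : ℝ) - 1) + 1 := fun x => by ring
    rw [h4, spectralMoment_four fun x y a b hxy hxa hya hxb hyb =>
      hT.isAcyclic.eq_of_common_neighbors hxy hxa hya hxb hyb]
    simp_rw [hdeg]
    rw [← Finset.sum_add_sum_compl A]
    simp only [Finset.sum_add_distrib, ← Finset.mul_sum, hsumA', hsumB', Finset.sum_const, hA, hB,
      nsmul_eq_mul, mul_one]
    nlinarith
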